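/- arXiv:2407.10513 — 7 statements merged into one kernel-verified Lean document; each statement's English description precedes it below -/
import Mathlib

section
/- Let A and B be real 2×2 matrices, A ≠ B, such that the pair {A,B} is irreducible (the only linear subspaces of ℝ² invariant under both A and B are {0} and ℝ²). Then there exists an invertible real 2×2 matrix S with S⁻¹AS = B and S⁻¹BS = A (i.e., {A,B} is τ-permutable) if and only if tr(A) = tr(B) and det(A) = det(B). -/
/-!
Similarity preserves trace and determinant, which gives one direction. For the other, put
`M = A + B` and `D = A - B`; an invertible `S` swaps `A` and `B` exactly when it commutes with `M`
and anticommutes with `D`. Let `M₀` be the traceless part of `M`. Equality of traces and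
determinants says that `tr D = 0` and `tr (M₀ D) = 0`, and two traceless `2 × 2` matrices `X`, `Y`
satisfy `X Y + Y X = tr (X Y) • 1`. Hence `M₀` anticommutes with `D`, and `S = M₀` works if it is
invertible. If `M₀` is singular but nonzero, its kernel is a line invariant under `M` and `D`,
contradicting irreducibility. If `M₀ = 0`, then `M` is scalar and the antidiagonal matrix
`!![0, b; -c, 0]`, with `b`, `c` the off-diagonal entries of `A`, anticommutes with `D`; it is
invertible because `b = 0` or `c = 0` would make a coordinate axis invariant.
-/

/-- A vector whose span is invariant under both `A` and `B`, the invariance being expressed by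
`det (v, A v) = det (v, B v) = 0`, vanishes if the pair is irreducible. -/
lemma eq_zero_of_common_eigenvector (a b c d e f g h : ℝ)
    (hirr : ∀ p : Submodule ℝ (Fin 2 → ℝ),
      (∀ x ∈ p, (!![a, b; c, d]).mulVec x ∈ p) →
      (∀ x ∈ p, (!![e, f; g, h]).mulVec x ∈ p) → p = ⊥ ∨ p = ⊤)
    (x y : ℝ) (hA : x * (c * x + d * y) = y * (a * x + b * y))
    (hB : x * (g * x + h * y) = y * (e * x + f * y)) : x = 0 ∧ y = 0 := by
  by_contra hv
  have hn : x ^ 2 + y ^ 2 ≠ 0 := fun h0 => hv ⟨by nlinarith, by nlinarith⟩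
  have key : ∀ a b c d : ℝ, x * (c * x + d * y) = y * (a * x + b * y) →
      ∀ w ∈ Submodule.span ℝ {![x, y]},
        (!![a, b; c, d]).mulVec w ∈ Submodule.span ℝ {![x, y]} := by
    intro a b c d hA w hw
    obtain ⟨t, rfl⟩ := Submodule.mem_span_singleton.1 hw
    rw [Matrix.mulVec_smul]
    apply Submodule.smul_mem
    -- The eigenvalue is the Rayleigh quotient.
    refine Submodule.mem_span_singleton.2
      ⟨((a * x + b * y) * x + (c * x + d * y) * y) / (x ^ 2 + y ^ 2), ?_⟩
    ext i
    fin_cases i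
    · simp [Matrix.mulVec, dotProduct, Fin.sum_univ_two]
      field_simp
      linear_combination y * hA
    · simp [Matrix.mulVec, dotProduct, Fin.sum_univ_two]
      field_simp
      linear_combination -x * hA
  rcases hirr _ (key a b c d hA) (key e f g h hB) with hp | hp
  · rw [Submodule.span_singleton_eq_bot] at hp
    exact hv ⟨by simpa using congrFun hp 0, by simpa using congrFun hp 1⟩
  · have hm : ![-y, x] ∈ Submodule.span ℝ {![x, y]} := by rw [hp]; trivial
    obtain ⟨t, ht⟩ := Submodule.mem_span_singleton.1 hm
    have h0 : t * x = -y := by simpa using congrFun ht 0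
    have h1 : t * y = x := by simpa using congrFun ht 1
    exact hn (by linear_combination y * h0 - x * h1)

lemma conj_of_mul_eq (A B S : Matrix (Fin 2) (Fin 2) ℝ) (hS : S.det ≠ 0)
    (h1 : A * S = S * B) (h2 : B * S = S * A) :
    ∃ S : Matrix (Fin 2) (Fin 2) ℝ, IsUnit S ∧ S⁻¹ * A * S = B ∧ S⁻¹ * B * S = A := by
  have hu : IsUnit S.det := isUnit_iff_ne_zero.2 hS
  refine ⟨S, (Matrix.isUnit_iff_isUnit_det S).2 hu, ?_, ?_⟩
  · rw [Matrix.mul_assoc, h1, Matrix.nonsing_inv_mul_cancel_left _ _ hu]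
  · rw [Matrix.mul_assoc, h2, Matrix.nonsing_inv_mul_cancel_left _ _ hu]

/-- An irreducible pair {A,B} of real 2×2 matrices, A ≠ B, is
τ-permutable (∃ invertible S with S⁻¹AS = B and S⁻¹BS = A) iff
tr(A) = tr(B) and det(A) = det(B). -/
theorem tau_permutable_iff_trace_det_eq
    (A B : Matrix (Fin 2) (Fin 2) ℝ) (hAB : A ≠ B)
    (hirr : ∀ p : Submodule ℝ (Fin 2 → ℝ),
      (∀ x ∈ p, A.mulVec x ∈ p) → (∀ x ∈ p, B.mulVec x ∈ p) → p = ⊥ ∨ p = ⊤) :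
    (∃ S : Matrix (Fin 2) (Fin 2) ℝ, IsUnit S ∧ S⁻¹ * A * S = B ∧ S⁻¹ * B * S = A) ↔
      (A.trace = B.trace ∧ A.det = B.det) := by
  constructor
  · rintro ⟨S, hS, rfl, -⟩
    have hu := (Matrix.isUnit_iff_isUnit_det S).1 hS
    constructor
    · rw [Matrix.trace_mul_comm, Matrix.mul_nonsing_inv_cancel_left _ _ hu]
    · rw [Matrix.det_mul_comm, Matrix.mul_nonsing_inv_cancel_left _ _ hu]
  · rintro ⟨ht, hd⟩
    rw [Matrix.eta_fin_two A, Matrix.eta_fin_two B] at *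
    generalize A 0 0 = a, A 0 1 = b, A 1 0 = c, A 1 1 = d,
      B 0 0 = e, B 0 1 = f, B 1 0 = g, B 1 1 = h at *
    simp only [Matrix.trace_fin_two_of, Matrix.det_fin_two_of] at ht hd
    have ev := eq_zero_of_common_eigenvector a b c d e f g h hirr
    obtain rfl : h = a + d - e := by linarith
    -- `!![p, q; r, -p]` is the traceless part `M₀` of `A + B`.
    obtain ⟨p, hp⟩ : ∃ p, p = e - d := ⟨_, rfl⟩
    obtain ⟨q, hq⟩ : ∃ q, q = b + f := ⟨_, rfl⟩
    obtain ⟨r, hr⟩ : ∃ r, r = c + g := ⟨_, rfl⟩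
    by_cases h0 : p ^ 2 + q * r = 0
    · -- `tr (M₀ A) = tr (M₀ B) = 0`, as `tr (M₀ M₀) = tr (M₀ D) = 0`.
      have kA : c * q + b * r + (a - d) * p = 0 := by
        subst hp hq hr; linear_combination h0 - hd
      have kB : g * q + f * r + (e - (a + d - e)) * p = 0 := by
        subst hp hq hr; linear_combination h0 + hd
      -- Both columns `(q, -p)` and `(p, r)` lie in the kernel of `M₀`.
      have h1 := ev q (-p) (by linear_combination q * kA - b * h0)
        (by linear_combination q * kB - f * h0)
      have h2 := ev p r (by linear_combination -r * kA + c * h0)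
        (by linear_combination -r * kB + g * h0)
      obtain ⟨hq0, -⟩ := h1
      obtain ⟨hp0, hr0⟩ := h2
      obtain rfl : e = d := by linarith
      obtain rfl : f = -b := by linarith
      obtain rfl : g = -c := by linarith
      have hb : b ≠ 0 := by
        rintro rfl
        simpa using ev 0 1 (by ring) (by ring)
      have hc : c ≠ 0 := by
        rintro rfl
        simpa using ev 1 0 (by ring) (by ring)
      refine conj_of_mul_eq _ _ !![0, b; -c, 0] (by simp [hb, hc]) ?_ ?_
      all_goals
        ext i j
        fin_cases i <;> fin_cases j <;> simp <;> ring
    · refine conj_of_mul_eq _ _ !![p, q; r, -p] ?_ ?_ ?_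
      · rw [Matrix.det_fin_two_of]
        exact fun hdet => h0 (by linear_combination -hdet)
      all_goals
        subst hp hq hr
        ext i j
        fin_cases i <;> fin_cases j <;> simp <;>
          first | ring1 | linear_combination hd | linear_combination -hd
end

section
/- Let φ be a real number and κ > 1, and define the 2×2 real matrices A = [[0, −1/κ],[κ, 2cos φ]] and B = [[0, −κ],[1/κ, 2cos φ]]. Let S = [[c, 1],[−1, −c]] where c = 2κ cos φ/(κ²+1). Then S is invertible and S⁻¹AS = B and S⁻¹BS = A; in particular the pair {A,B} is τ-permutable. -/
/-! Both conjugation identities `S⁻¹AS = B` and `S⁻¹BS = A` are equivalent to `AS = SB` and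
`BS = SA`, and entrywise each of these reduces to `c / κ + c * κ = 2 * cos φ`, which is the
choice of `c`. The matrix `S` is invertible because `det S = 1 - c ^ 2` and `|c| < 1`, by
`|cos φ| ≤ 1` and `2 * κ < κ ^ 2 + 1`. -/

open Matrix

/-- For κ > 1, A = [[0, −1/κ],[κ, 2cos φ]],
B = [[0, −κ],[1/κ, 2cos φ]] and S = [[c, 1],[−1, −c]] with
c = 2κ cos φ/(κ²+1), S is invertible, S⁻¹AS = B and S⁻¹BS = A; in particular
A ≠ B and the pair {A,B} is τ-permutable. -/
theorem exotic_pair_tau_permutable (φ κ : ℝ) (hκ : 1 < κ) :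
    let A : Matrix (Fin 2) (Fin 2) ℝ := !![0, -(1 / κ); κ, 2 * Real.cos φ]
    let B : Matrix (Fin 2) (Fin 2) ℝ := !![0, -κ; 1 / κ, 2 * Real.cos φ]
    let c : ℝ := 2 * κ * Real.cos φ / (κ ^ 2 + 1)
    let S : Matrix (Fin 2) (Fin 2) ℝ := !![c, 1; -1, -c]
    IsUnit S ∧ S⁻¹ * A * S = B ∧ S⁻¹ * B * S = A ∧ A ≠ B := by
  intro A B c S
  have hκ0 : κ ≠ 0 := by positivity
  have hpos : 0 < κ ^ 2 + 1 := by positivity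
  have hcmul : c * (κ ^ 2 + 1) = 2 * κ * Real.cos φ := div_mul_cancel₀ _ hpos.ne'
  have hc : c / κ = 2 * Real.cos φ - c * κ := by
    field_simp
    linarith
  have hlt : 2 * κ < κ ^ 2 + 1 := by nlinarith
  have hc1 : c < 1 := by
    rw [div_lt_one hpos]
    nlinarith [Real.cos_le_one φ]
  have hc2 : -1 < c := by
    rw [lt_div_iff₀ hpos]
    nlinarith [Real.neg_one_le_cos φ]
  have hdet : IsUnit S.det := by
    have h : S.det = 1 - c ^ 2 := by
      simp only [S, Matrix.det_fin_two_of]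
      ring
    rw [h, isUnit_iff_ne_zero]
    nlinarith
  have hAS : A * S = S * B := by
    ext i j
    fin_cases i <;> fin_cases j <;>
      simp [A, B, S, Matrix.mul_apply, Fin.sum_univ_two] <;> grind
  have hBS : B * S = S * A := by
    ext i j
    fin_cases i <;> fin_cases j <;>
      simp [A, B, S, Matrix.mul_apply, Fin.sum_univ_two] <;> grind
  refine ⟨(Matrix.isUnit_iff_isUnit_det S).2 hdet, ?_, ?_, ?_⟩
  · rw [mul_assoc, hAS, Matrix.nonsing_inv_mul_cancel_left _ _ hdet]
  · rw [mul_assoc, hBS, Matrix.nonsing_inv_mul_cancel_left _ _ hdet]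
  · intro h
    -- The lower-left entries would give `κ = 1 / κ`, contradicting `1 < κ`.
    have h10 : κ = 1 / κ := congrFun (congrFun h 1) 0
    rw [eq_div_iff hκ0] at h10
    nlinarith
end

section
/- Let κ > 1 and μ > 0, let A = [[0, −1/κ],[κ, −1]], B = [[0, −κ],[1/κ, −1]], Ã = κ^{−2/3}A, B̃ = κ^{−2/3}B, v = (1, κ/(1+κ²)), w = (1,0), and define v₁ = μv, v₂ = w, v₃ = −Ãv₁, v₄ = −Ãv₂, v₅ = −Ãv₃, v₆ = −B̃v₄, v_{i+6} = −v_i for i = 1,…,6. Then with T = [[0,−1],[1,0]] one has ⟨v_i, T v_j⟩ > 0 for all 1 ≤ i < j ≤ 6; in particular, v_i and v_j are linearly independent for all 1 ≤ i < j ≤ 6, so the twelve points v₁,…,v₁₂ span exactly six pairwise distinct lines through the origin, and this holds for every choice of κ > 1 and μ > 0. -/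
/-!
The form `⟨x, T y⟩ = x₁ y₀ - x₀ y₁` is positive exactly when `y` lies strictly clockwise of `x` by an
angle less than `π`. Up to positive factors the first six vertices are
`(1 + κ², κ)`, `(1, 0)`, `(1, -κ³)`, `(0, -1)`, `(-κ, -(1 + κ²))`, `(-κ, -1)`
(`vtx_eq_scale_smul_dir`). The fifteen pairings of these directions involve neither `μ` nor
`κ^(-2/3)`, and each is a polynomial in `κ` that is positive for `κ > 0` (`turn_dir_pos`);
bilinearity then gives positivity for the vertices themselves. Since `⟨x, T x⟩ = 0`, a nonzero pairing forces linear
independence (`linearIndependent_of_turn_ne_zero`), and independent vectors span distinct lines,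
whereas `v_{i+6} = -v_i` spans the same line as `v_i`.
-/

open Matrix

/-- A = [[0, −1/κ],[κ, −1]]. -/
noncomputable def matA (κ : ℝ) : Matrix (Fin 2) (Fin 2) ℝ := !![0, -(1 / κ); κ, -1]

/-- B = [[0, −κ],[1/κ, −1]]. -/
noncomputable def matB (κ : ℝ) : Matrix (Fin 2) (Fin 2) ℝ := !![0, -κ; 1 / κ, -1]

/-- Ã = κ^{−2/3} A. -/
noncomputable def tA (κ : ℝ) : Matrix (Fin 2) (Fin 2) ℝ := κ ^ (-(2 : ℝ) / 3) • matA κ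

/-- B̃ = κ^{−2/3} B. -/
noncomputable def tB (κ : ℝ) : Matrix (Fin 2) (Fin 2) ℝ := κ ^ (-(2 : ℝ) / 3) • matB κ

/-- v₁ = μ·(1, κ/(1+κ²)). -/
noncomputable def pv1 (κ μ : ℝ) : Fin 2 → ℝ := μ • ![1, κ / (1 + κ ^ 2)]

/-- v₂ = (1,0). -/
noncomputable def pv2 : Fin 2 → ℝ := ![1, 0]

/-- v₃ = −Ãv₁. -/
noncomputable def pv3 (κ μ : ℝ) : Fin 2 → ℝ := -(tA κ).mulVec (pv1 κ μ)

/-- v₄ = −Ãv₂. -/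
noncomputable def pv4 (κ : ℝ) : Fin 2 → ℝ := -(tA κ).mulVec pv2

/-- v₅ = −Ãv₃. -/
noncomputable def pv5 (κ μ : ℝ) : Fin 2 → ℝ := -(tA κ).mulVec (pv3 κ μ)

/-- v₆ = −B̃v₄. -/
noncomputable def pv6 (κ : ℝ) : Fin 2 → ℝ := -(tB κ).mulVec (pv4 κ)

/-- The twelve vertices v₁,…,v₁₂ (indexed 0,…,11), with v_{i+6} = −v_i. -/
noncomputable def vtx (κ μ : ℝ) : Fin 12 → Fin 2 → ℝ :=
  ![pv1 κ μ, pv2, pv3 κ μ, pv4 κ, pv5 κ μ, pv6 κ,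
    -pv1 κ μ, -pv2, -pv3 κ μ, -pv4 κ, -pv5 κ μ, -pv6 κ]

/-- T = [[0,−1],[1,0]]. -/
noncomputable def Trot : Matrix (Fin 2) (Fin 2) ℝ := !![0, -1; 1, 0]

/-- The directions of the six vertices `v₁, …, v₆`, indexed from `0`, normalized to have polynomial
entries in `κ`. -/
def dir (κ : ℝ) : Fin 6 → Fin 2 → ℝ :=
  ![![1 + κ ^ 2, κ], ![1, 0], ![1, -κ ^ 3], ![0, -1], ![-κ, -(1 + κ ^ 2)], ![-κ, -1]]

/-- The factor by which `dir κ i` is multiplied to give the vertex with index `i`. -/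
noncomputable def scale (κ μ : ℝ) : Fin 6 → ℝ :=
  ![μ / (1 + κ ^ 2), 1, κ ^ (-(2 : ℝ) / 3) * μ / (1 + κ ^ 2), κ ^ (-(2 : ℝ) / 3) * κ,
    (κ ^ (-(2 : ℝ) / 3)) ^ 2 * μ * κ / (1 + κ ^ 2), (κ ^ (-(2 : ℝ) / 3)) ^ 2 * κ]

lemma scale_pos {κ μ : ℝ} (hκ : 0 < κ) (hμ : 0 < μ) (i : Fin 6) : 0 < scale κ μ i := by
  have hc : 0 < κ ^ (-(2 : ℝ) / 3) := Real.rpow_pos_of_pos hκ _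
  fin_cases i <;> simp only [scale] <;> simp <;> positivity

lemma vtx_eq_scale_smul_dir {κ : ℝ} (hκ : 0 < κ) (μ : ℝ) (i : Fin 6) :
    vtx κ μ (Fin.castLE (by norm_num) i) = scale κ μ i • dir κ i := by
  have hD : 1 + κ ^ 2 ≠ 0 := by positivity
  have hκ' : κ ≠ 0 := hκ.ne'
  ext k
  fin_cases i <;> fin_cases k <;>
    simp [vtx, pv1, pv2, pv3, pv4, pv5, pv6, tA, tB, matA, matB, scale, dir,
      dotProduct, Fin.sum_univ_two] <;>
    generalize κ ^ (-(2 : ℝ) / 3) = c <;> field_simp <;> ring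

lemma turn_eq (x y : Fin 2 → ℝ) : x ⬝ᵥ Trot.mulVec y = x 1 * y 0 - x 0 * y 1 := by
  simp [Trot, Matrix.mulVec, dotProduct, Fin.sum_univ_two]
  ring

lemma turn_dir_pos {κ : ℝ} (hκ : 0 < κ) {i j : Fin 6} (hij : i < j) :
    0 < dir κ i ⬝ᵥ Trot.mulVec (dir κ j) := by
  rw [turn_eq]
  have h2 : 0 < κ ^ 2 := by positivity
  have h3 : 0 < κ ^ 3 := by positivity
  have h4 : 0 < κ ^ 4 := by positivity
  have h5 : 0 < κ ^ 5 := by positivity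
  fin_cases i <;> fin_cases j <;> first
    | exact absurd hij (by decide)
    | (simp [dir]; try nlinarith)

lemma linearIndependent_of_turn_ne_zero {x y : Fin 2 → ℝ} (h : x ⬝ᵥ Trot.mulVec y ≠ 0) :
    LinearIndependent ℝ ![x, y] := by
  rw [turn_eq] at h
  rw [LinearIndependent.pair_iff]
  intro s t hst
  have h0 : s * x 0 + t * y 0 = 0 := by simpa using congrFun hst 0
  have h1 : s * x 1 + t * y 1 = 0 := by simpa using congrFun hst 1
  -- Cramer's rule: eliminating one unknown leaves the other times the pairing.
  refine ⟨(mul_eq_zero.mp ?_).resolve_right h, (mul_eq_zero.mp ?_).resolve_right h⟩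
  · linear_combination y 0 * h1 - y 1 * h0
  · linear_combination x 1 * h0 - x 0 * h1

lemma span_ne_of_linearIndependent {x y : Fin 2 → ℝ} (h : LinearIndependent ℝ ![x, y]) :
    Submodule.span ℝ {x} ≠ Submodule.span ℝ {y} := by
  intro hs
  have hy : x ∈ Submodule.span ℝ {y} := hs ▸ Submodule.mem_span_singleton_self x
  obtain ⟨a, rfl⟩ := Submodule.mem_span_singleton.mp hy
  have := (LinearIndependent.pair_iff.mp h) 1 (-a) (by simp)
  exact one_ne_zero this.1

lemma vtx_add_six (κ μ : ℝ) (i : Fin 12) : vtx κ μ (i + 6) = -vtx κ μ i := by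
  fin_cases i <;> simp [vtx]

/-- for all κ > 1, μ > 0 one has ⟨v_i, Tv_j⟩ > 0 for
1 ≤ i < j ≤ 6; in particular v_i, v_j are linearly independent for
1 ≤ i < j ≤ 6, so the twelve points v₁,…,v₁₂ span exactly six pairwise
distinct lines through the origin. -/
theorem vertices_positive_turns (κ μ : ℝ) (hκ : 1 < κ) (hμ : 0 < μ) :
    (∀ i j : Fin 12, i < j → (j : ℕ) < 6 →
      0 < vtx κ μ i ⬝ᵥ Trot.mulVec (vtx κ μ j)) ∧
    (∀ i j : Fin 12, i < j → (j : ℕ) < 6 →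
      LinearIndependent ℝ ![vtx κ μ i, vtx κ μ j]) ∧
    (∀ i j : Fin 12, (i : ℕ) < 6 → (j : ℕ) < 6 → i ≠ j →
      Submodule.span ℝ {vtx κ μ i} ≠ Submodule.span ℝ {vtx κ μ j}) ∧
    (∀ i : Fin 12,
      Submodule.span ℝ {vtx κ μ (i + 6)} = Submodule.span ℝ {vtx κ μ i}) := by
  have hκ0 : 0 < κ := by linarith
  have hpos : ∀ i j : Fin 12, i < j → (j : ℕ) < 6 →
      0 < vtx κ μ i ⬝ᵥ Trot.mulVec (vtx κ μ j) := by
    intro i j hij hj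
    have hi : (i : ℕ) < 6 := lt_trans hij hj
    have ei := vtx_eq_scale_smul_dir hκ0 μ ⟨i, hi⟩
    have ej := vtx_eq_scale_smul_dir hκ0 μ ⟨j, hj⟩
    simp only [Fin.castLE_mk, Fin.eta] at ei ej
    rw [ei, ej, Matrix.mulVec_smul, smul_dotProduct, dotProduct_smul]
    exact mul_pos (scale_pos hκ0 hμ _) (mul_pos (scale_pos hκ0 hμ _) (turn_dir_pos hκ0 hij))
  have hind : ∀ i j : Fin 12, i < j → (j : ℕ) < 6 →
      LinearIndependent ℝ ![vtx κ μ i, vtx κ μ j] :=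
    fun i j hij hj => linearIndependent_of_turn_ne_zero (hpos i j hij hj).ne'
  refine ⟨hpos, hind, fun i j hi hj hne => ?_, fun i => ?_⟩
  · rcases lt_or_gt_of_ne hne with h | h
    · exact span_ne_of_linearIndependent (hind i j h hj)
    · exact (span_ne_of_linearIndependent (hind j i h hi)).symm
  · rw [vtx_add_six, ← Set.neg_singleton, Submodule.span_neg]
end

section
/- Let κ > 1 and μ > 0, and define v₁,…,v₁₂ as in the construction below. Then ⟨v₂, Tv₃⟩ = ⟨v₁₁, Tv₁₂⟩ = κ^{7/3}μ/(κ²+1) ≠ 0, and the four points Ãv₄, Ãv₆, B̃v₃, and −B̃v₁ satisfy the following cone memberships for every κ > 1 and μ > 0: Ãv₄ and B̃v₃ lie in the sector S(v₁₁, v₁₂) = {s·v₁₁ + t·v₁₂ : s, t ≥ 0}, and Ãv₆ and −B̃v₁ lie in the sector S(v₂, v₃) = {s·v₂ + t·v₃ : s, t ≥ 0}. -/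
/-!
Everything is an explicit computation. Write `c = κ ^ (-2/3)` and `D = 1 + κ²`. Then

* `v₂ = (1, 0)` and `v₃ = (c μ / D) (1, -κ³)`,
* `v₁₁ = c² μ (κ² / D, κ)` and `v₁₂ = c² (κ², κ)`,
* `Ãv₄ = c² (1, κ)` and `B̃v₃ = (c² μ / D) (κ⁴, (1 + κ⁴) / κ)`,
* `Ãv₆ = c³ (1, κ - κ³)` and `-B̃v₁ = (c μ / D) (κ², -1 / κ)`.

Solving the resulting `2 × 2` linear systems gives the sector coefficients, whose signs are governed
only by `κ² - 1`, `κ⁴ - 1` and `κ⁶ - 1`, all positive for `κ > 1`. The two scalar products follow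
from `c κ³ = κ ^ (7/3)` and `c³ κ² = 1`.
-/

open Matrix

open Matrix

/-- The sector S(x,y) = {s·x + t·y : s, t ≥ 0}. -/
def inSector (x y z : Fin 2 → ℝ) : Prop :=
  ∃ s t : ℝ, 0 ≤ s ∧ 0 ≤ t ∧ z = s • x + t • y

theorem pv3_eq (κ μ : ℝ) (hκ : 1 < κ) :
    pv3 κ μ = (κ ^ (-(2 : ℝ) / 3) * μ / (1 + κ ^ 2)) • ![1, -κ ^ 3] := by
  have hD : 1 + κ ^ 2 ≠ 0 := by positivity
  ext i
  fin_cases i <;> simp [pv3, pv1, tA, matA] <;> field_simp <;> ring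

theorem pv4_eq (κ : ℝ) : pv4 κ = κ ^ (-(2 : ℝ) / 3) • ![0, -κ] := by
  ext i
  fin_cases i <;> simp [pv4, pv2, tA, matA]

theorem pv5_eq (κ μ : ℝ) (hκ : 1 < κ) :
    pv5 κ μ = -((κ ^ (-(2 : ℝ) / 3)) ^ 2 * μ) • ![κ ^ 2 / (1 + κ ^ 2), κ] := by
  have hD : 1 + κ ^ 2 ≠ 0 := by positivity
  rw [pv5, pv3_eq κ μ hκ]
  ext i
  fin_cases i <;> simp [tA, matA] <;> field_simp <;> ring

theorem pv6_eq (κ : ℝ) (hκ : 1 < κ) :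
    pv6 κ = -((κ ^ (-(2 : ℝ) / 3)) ^ 2) • ![κ ^ 2, κ] := by
  have h0 : κ ≠ 0 := by positivity
  rw [pv6, pv4_eq]
  ext i
  fin_cases i <;> simp [tB, matB] <;> ring

/-- ⟨v₂,Tv₃⟩ = ⟨v₁₁,Tv₁₂⟩ = κ^{7/3}μ/(κ²+1) ≠ 0, and for all
κ > 1, μ > 0: Ãv₄ and B̃v₃ lie in the sector S(v₁₁,v₁₂), while Ãv₆ and −B̃v₁
lie in the sector S(v₂,v₃). (Indices are shifted by one: vtx 0 = v₁.) -/
theorem sector_memberships (κ μ : ℝ) (hκ : 1 < κ) (hμ : 0 < μ) :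
    vtx κ μ 1 ⬝ᵥ Trot.mulVec (vtx κ μ 2) = κ ^ ((7 : ℝ) / 3) * μ / (κ ^ 2 + 1) ∧
    vtx κ μ 10 ⬝ᵥ Trot.mulVec (vtx κ μ 11) = κ ^ ((7 : ℝ) / 3) * μ / (κ ^ 2 + 1) ∧
    κ ^ ((7 : ℝ) / 3) * μ / (κ ^ 2 + 1) ≠ 0 ∧
    inSector (vtx κ μ 10) (vtx κ μ 11) ((tA κ).mulVec (vtx κ μ 3)) ∧
    inSector (vtx κ μ 10) (vtx κ μ 11) ((tB κ).mulVec (vtx κ μ 2)) ∧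
    inSector (vtx κ μ 1) (vtx κ μ 2) ((tA κ).mulVec (vtx κ μ 5)) ∧
    inSector (vtx κ μ 1) (vtx κ μ 2) (-(tB κ).mulVec (vtx κ μ 0)) := by
  have hκ0 : 0 < κ := by linarith
  have h0 : κ ≠ 0 := hκ0.ne'
  have hμ0 : μ ≠ 0 := hμ.ne'
  have hD : 1 + κ ^ 2 ≠ 0 := by positivity
  have hD' : κ ^ 2 + 1 ≠ 0 := by positivity
  have h2 : 0 ≤ κ ^ 2 - 1 := sub_nonneg.2 (one_le_pow₀ hκ.le)
  have h4 : 0 ≤ κ ^ 4 - 1 := sub_nonneg.2 (one_le_pow₀ hκ.le)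
  have h6 : 0 ≤ κ ^ 6 - 1 := sub_nonneg.2 (one_le_pow₀ hκ.le)
  have hc7 : κ ^ ((7 : ℝ) / 3) = κ ^ (-(2 : ℝ) / 3) * κ ^ 3 := by
    rw [← Real.rpow_natCast, ← Real.rpow_add hκ0]
    norm_num
  have hc3 : (κ ^ (-(2 : ℝ) / 3)) ^ 3 * κ ^ 2 = 1 := by
    rw [← Real.rpow_natCast, ← Real.rpow_mul hκ0.le, ← Real.rpow_natCast κ 2,
      ← Real.rpow_add hκ0]
    norm_num
  have hc : 0 < κ ^ (-(2 : ℝ) / 3) := Real.rpow_pos_of_pos hκ0 _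
  have e0 : vtx κ μ 0 = pv1 κ μ := rfl
  have e1 : vtx κ μ 1 = pv2 := rfl
  have e2 : vtx κ μ 2 = pv3 κ μ := rfl
  have e3 : vtx κ μ 3 = pv4 κ := rfl
  have e5 : vtx κ μ 5 = pv6 κ := rfl
  have e10 : vtx κ μ 10 = -pv5 κ μ := rfl
  have e11 : vtx κ μ 11 = -pv6 κ := rfl
  rw [e0, e1, e2, e3, e5, e10, e11, pv3_eq κ μ hκ, pv4_eq, pv5_eq κ μ hκ, pv6_eq κ hκ, hc7,
    tA, tB, pv1, pv2]
  -- From here on only `hc3` and `hc` matter about the power of `κ`.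
  generalize κ ^ (-(2 : ℝ) / 3) = c at *
  have hc0 : c ≠ 0 := hc.ne'
  refine ⟨?_, ?_, by positivity, ?_, ?_, ?_, ?_⟩
  · simp [Trot, dotProduct, Fin.sum_univ_two]
    field_simp
    ring
  -- The product comes out as `c⁴ μ κ⁵ / D`; `c³ κ² = 1` brings it to the stated form.
  · have key : (c ^ 4 * μ * κ ^ 5) / (1 + κ ^ 2) = c * κ ^ 3 * μ / (κ ^ 2 + 1) := by
      rw [add_comm (κ ^ 2)]
      congr 1
      linear_combination c * μ * κ ^ 3 * hc3
    rw [← key]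
    simp [Trot, dotProduct, Fin.sum_univ_two]
    field_simp
    ring
  -- The coefficients below solve the `2 × 2` systems `z = s • x + t • y`.
  · refine ⟨(κ ^ 4 - 1) / (κ ^ 4 * μ), 1 / κ ^ 4, by positivity, by positivity, ?_⟩
    ext i
    fin_cases i <;> simp [matA] <;> field_simp <;> ring
  · refine ⟨1 / κ ^ 4, μ * (κ ^ 6 - 1) / (κ ^ 4 * (1 + κ ^ 2)), by positivity, by positivity, ?_⟩
    ext i
    fin_cases i <;> simp [matB] <;> field_simp <;> ring
  · refine ⟨c ^ 3 / κ ^ 2, c ^ 2 * (κ ^ 2 - 1) * (1 + κ ^ 2) / (μ * κ ^ 2), by positivity,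
      by positivity, ?_⟩
    ext i
    fin_cases i <;> simp [matA] <;> field_simp <;> ring
  · refine ⟨c * μ * (κ ^ 6 - 1) / (κ ^ 4 * (1 + κ ^ 2)), 1 / κ ^ 4, by positivity,
      by positivity, ?_⟩
    ext i
    fin_cases i <;> simp [matB] <;> field_simp <;> ring
end

section
/- Let κ > 1 and μ > 0, and define v₁,…,v₁₂ as in the construction below. Let Δ(x,y) = {sx + ty : s, t ≥ 0, s + t ≤ 1} denote the triangle with vertices x, y, 0. Then the four inclusions Ãv₄ ∈ Δ(v₁₁, v₁₂), Ãv₆ ∈ Δ(v₂, v₃), B̃v₃ ∈ Δ(v₁₁, v₁₂), and −B̃v₁ ∈ Δ(v₂, v₃) hold simultaneously if and only if κ^{2/3} ≤ μ ≤ (κ²+1)²/(κ⁴+κ²+1). -/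
/-!
Each vertex pair `(v₁₁, v₁₂)`, `(v₂, v₃)` is a basis of the plane, so membership of a point in the
triangle it spans with `0` can be read off from the unique coordinates `(s, t)` of that point in
the basis (`inTriangle_iff_of_coords`). Writing `c = κ^(-2/3)`, so that `c³κ² = 1`, the coordinates are

* `Ãv₄`: `((κ⁴ - 1)/(κ⁴μ), 1/κ⁴)`, so membership means `1 ≤ μ`;
* `Ãv₆`: `(1/κ⁴, (κ⁴ - 1)/(κ⁴cμ))`, so membership means `1 ≤ cμ`, i.e. `κ^(2/3) ≤ μ`;
* `B̃v₃`: `(1/κ⁴, μ(κ⁶ - 1)/(κ⁴(κ² + 1)))`, so membership means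
  `μ ≤ (κ² + 1)²/(κ⁴ + κ² + 1)`;
* `-B̃v₁`: `(cμ(κ⁶ - 1)/(κ⁴(κ² + 1)), 1/κ⁴)`, so membership means that `cμ` obeys the same upper bound.

Since `0 < c < 1`, the first and the last conditions follow from the second and the third.
-/

open Matrix

open Matrix

/-- The triangle △xy0 = {s·x + t·y : s, t ≥ 0, s + t ≤ 1}. -/
def inTriangle (x y z : Fin 2 → ℝ) : Prop :=
  ∃ s t : ℝ, 0 ≤ s ∧ 0 ≤ t ∧ s + t ≤ 1 ∧ z = s • x + t • y

theorem inTriangle_iff_of_coords {x y z : Fin 2 → ℝ} {s t : ℝ}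
    (hdet : x 0 * y 1 - x 1 * y 0 ≠ 0)
    (h0 : z 0 = s * x 0 + t * y 0) (h1 : z 1 = s * x 1 + t * y 1) :
    inTriangle x y z ↔ 0 ≤ s ∧ 0 ≤ t ∧ s + t ≤ 1 := by
  constructor
  · rintro ⟨s', t', hs, ht, hst, hz⟩
    have e0 : z 0 = s' * x 0 + t' * y 0 := by rw [hz]; simp
    have e1 : z 1 = s' * x 1 + t' * y 1 := by rw [hz]; simp
    -- Cramer's rule for the difference of the two coordinate pairs
    have hs' : s = s' := mul_right_cancel₀ hdet (by
      linear_combination (h0 - e0) * (-y 1) + (h1 - e1) * y 0)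
    have ht' : t = t' := mul_right_cancel₀ hdet (by
      linear_combination (h0 - e0) * x 1 - (h1 - e1) * x 0)
    subst hs' ht'
    exact ⟨hs, ht, hst⟩
  · rintro ⟨hs, ht, hst⟩
    refine ⟨s, t, hs, ht, hst, ?_⟩
    ext i
    fin_cases i
    · simpa using h0
    · simpa using h1

/-- The inequality `s + t ≤ 1` on coordinates with a `1/κ⁴` entry and an entry inversely
proportional to `m`; used with `m = μ` and with `m = cμ`. -/
theorem lower_coord_iff {κ m : ℝ} (hκ : 1 < κ) (hm : 0 < m) :
    (κ ^ 4 - 1) / (κ ^ 4 * m) + 1 / κ ^ 4 ≤ 1 ↔ 1 ≤ m := by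
  have h4 : 0 < κ ^ 4 - 1 := sub_pos.2 (one_lt_pow₀ hκ (by norm_num))
  have e : (κ ^ 4 - 1) / (κ ^ 4 * m) + 1 / κ ^ 4 = (κ ^ 4 - 1 + m) / (κ ^ 4 * m) := by
    field_simp
  rw [e, div_le_one (by positivity)]
  constructor <;> intro h
  · by_contra! hlt
    nlinarith
  · nlinarith

/-- The inequality `s + t ≤ 1` on coordinates with a `1/κ⁴` entry and an entry proportional
to `m`; used with `m = μ` and with `m = cμ`. -/
theorem upper_coord_iff {κ m : ℝ} (hκ : 1 < κ) :
    1 / κ ^ 4 + m * (κ ^ 6 - 1) / (κ ^ 4 * (κ ^ 2 + 1)) ≤ 1 ↔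
      m ≤ (κ ^ 2 + 1) ^ 2 / (κ ^ 4 + κ ^ 2 + 1) := by
  have h2 : 0 < κ ^ 2 - 1 := sub_pos.2 (one_lt_pow₀ hκ (by norm_num))
  have e : 1 / κ ^ 4 + m * (κ ^ 6 - 1) / (κ ^ 4 * (κ ^ 2 + 1)) =
      (κ ^ 2 + 1 + m * (κ ^ 6 - 1)) / (κ ^ 4 * (κ ^ 2 + 1)) := by
    field_simp
  have e' : κ ^ 4 * (κ ^ 2 + 1) - (κ ^ 2 + 1 + m * (κ ^ 6 - 1)) =
      (κ ^ 2 - 1) * ((κ ^ 2 + 1) ^ 2 - m * (κ ^ 4 + κ ^ 2 + 1)) := by ring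
  rw [e, div_le_one (by positivity), le_div_iff₀ (by positivity), ← sub_nonneg, e',
    mul_nonneg_iff_of_pos_left h2, sub_nonneg]

/-- the four inclusions Ãv₄, B̃v₃ ∈ △(v₁₁,v₁₂,0) and
Ãv₆, −B̃v₁ ∈ △(v₂,v₃,0) hold simultaneously iff
κ^{2/3} ≤ μ ≤ (κ²+1)²/(κ⁴+κ²+1). (Indices shifted by one: vtx 0 = v₁.) -/
theorem triangle_memberships_iff_mu_range (κ μ : ℝ) (hκ : 1 < κ) (hμ : 0 < μ) :
    (inTriangle (vtx κ μ 10) (vtx κ μ 11) ((tA κ).mulVec (vtx κ μ 3)) ∧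
     inTriangle (vtx κ μ 1) (vtx κ μ 2) ((tA κ).mulVec (vtx κ μ 5)) ∧
     inTriangle (vtx κ μ 10) (vtx κ μ 11) ((tB κ).mulVec (vtx κ μ 2)) ∧
     inTriangle (vtx κ μ 1) (vtx κ μ 2) (-(tB κ).mulVec (vtx κ μ 0))) ↔
    (κ ^ ((2 : ℝ) / 3) ≤ μ ∧ μ ≤ (κ ^ 2 + 1) ^ 2 / (κ ^ 4 + κ ^ 2 + 1)) := by
  have hκ0 : 0 < κ := by linarith
  obtain ⟨c, hc⟩ : ∃ c : ℝ, c = κ ^ (-(2 : ℝ) / 3) := ⟨_, rfl⟩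
  have hc0 : 0 < c := hc ▸ Real.rpow_pos_of_pos hκ0 _
  have hc1 : c < 1 := hc ▸ Real.rpow_lt_one_of_one_lt_of_neg hκ (by norm_num)
  have hc3 : c ^ 3 * κ ^ 2 = 1 := by
    rw [hc, ← Real.rpow_natCast, ← Real.rpow_natCast, ← Real.rpow_mul hκ0.le,
      ← Real.rpow_add hκ0]
    norm_num
  have hcinv : κ ^ ((2 : ℝ) / 3) = c⁻¹ := by
    rw [hc, ← Real.rpow_neg hκ0.le]; norm_num
  have hcμ : 0 < c * μ := mul_pos hc0 hμ
  have h2 : 0 < κ ^ 2 - 1 := sub_pos.2 (one_lt_pow₀ hκ (by norm_num))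
  have h4 : 0 < κ ^ 4 - 1 := sub_pos.2 (one_lt_pow₀ hκ (by norm_num))
  have h6 : 0 < κ ^ 6 - 1 := sub_pos.2 (one_lt_pow₀ hκ (by norm_num))
  have hv1 : vtx κ μ 0 = ![μ, μ * κ / (1 + κ ^ 2)] := by
    ext i; fin_cases i <;> simp [vtx, pv1, mul_div_assoc]
  have hv2 : vtx κ μ 1 = ![1, 0] := rfl
  have hv3 : vtx κ μ 2 = ![c * μ / (1 + κ ^ 2), -(c * μ * κ ^ 3 / (1 + κ ^ 2))] := by
    ext i
    fin_cases i <;> simp [vtx, pv3, pv1, tA, matA, ← hc] <;>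
      field_simp <;> ring
  have hv4 : vtx κ μ 3 = ![0, -(c * κ)] := by
    ext i
    fin_cases i <;> simp [vtx, pv4, pv2, tA, matA, ← hc]
  have hv6 : vtx κ μ 5 = ![-(c ^ 2 * κ ^ 2), -(c ^ 2 * κ)] := by
    have : vtx κ μ 5 = -(tB κ).mulVec (vtx κ μ 3) := rfl
    rw [this, hv4]
    ext i
    fin_cases i <;> simp [tB, matB, ← hc] <;> field_simp
  have hv11 : vtx κ μ 10 = ![c ^ 2 * μ * κ ^ 2 / (1 + κ ^ 2), c ^ 2 * μ * κ] := by
    have : vtx κ μ 10 = - -(tA κ).mulVec (vtx κ μ 2) := rfl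
    rw [this, hv3]
    ext i
    fin_cases i <;> simp [tA, matA, ← hc] <;> field_simp
  have hv12 : vtx κ μ 11 = ![c ^ 2 * κ ^ 2, c ^ 2 * κ] := by
    have : vtx κ μ 11 = -vtx κ μ 5 := rfl
    rw [this, hv6]
    ext i
    fin_cases i <;> simp
  have hdet1 : vtx κ μ 10 0 * vtx κ μ 11 1 - vtx κ μ 10 1 * vtx κ μ 11 0 ≠ 0 := by
    have : vtx κ μ 10 0 * vtx κ μ 11 1 - vtx κ μ 10 1 * vtx κ μ 11 0 =
        -(c ^ 4 * μ * κ ^ 5 / (1 + κ ^ 2)) := by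
      rw [hv11, hv12]; simp; field_simp; ring
    rw [this]
    exact neg_ne_zero.2 (by positivity)
  have hdet2 : vtx κ μ 1 0 * vtx κ μ 2 1 - vtx κ μ 1 1 * vtx κ μ 2 0 ≠ 0 := by
    have : vtx κ μ 1 0 * vtx κ μ 2 1 - vtx κ μ 1 1 * vtx κ μ 2 0 =
        -(c * μ * κ ^ 3 / (1 + κ ^ 2)) := by
      rw [hv2, hv3]; simp
    rw [this]
    exact neg_ne_zero.2 (by positivity)
  have m1 : inTriangle (vtx κ μ 10) (vtx κ μ 11) ((tA κ).mulVec (vtx κ μ 3)) ↔ 1 ≤ μ := by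
    rw [inTriangle_iff_of_coords (s := (κ ^ 4 - 1) / (κ ^ 4 * μ)) (t := 1 / κ ^ 4) hdet1,
      lower_coord_iff hκ hμ]
    · exact ⟨fun h => h.2.2, fun h => ⟨by positivity, by positivity, h⟩⟩
    · rw [hv4, hv11, hv12]
      simp [tA, matA, ← hc]
      field_simp
      ring
    · rw [hv4, hv11, hv12]
      simp [tA, matA, ← hc]
      field_simp
      ring
  have m2 : inTriangle (vtx κ μ 1) (vtx κ μ 2) ((tA κ).mulVec (vtx κ μ 5)) ↔ 1 ≤ c * μ := by
    rw [inTriangle_iff_of_coords (s := 1 / κ ^ 4) (t := (κ ^ 4 - 1) / (κ ^ 4 * (c * μ))) hdet2,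
      add_comm (1 / κ ^ 4), lower_coord_iff hκ hcμ]
    · exact ⟨fun h => h.2.2, fun h => ⟨by positivity, by positivity, h⟩⟩
    · rw [hv6, hv2, hv3]
      simp [tA, matA, ← hc]
      field_simp
      linear_combination (κ ^ 2 + κ ^ 4) * hc3
    · rw [hv6, hv2, hv3]
      simp [tA, matA, ← hc]
      field_simp
      linear_combination (1 - κ ^ 4) * hc3
  have m3 : inTriangle (vtx κ μ 10) (vtx κ μ 11) ((tB κ).mulVec (vtx κ μ 2)) ↔
      μ ≤ (κ ^ 2 + 1) ^ 2 / (κ ^ 4 + κ ^ 2 + 1) := by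
    rw [inTriangle_iff_of_coords (s := 1 / κ ^ 4)
      (t := μ * (κ ^ 6 - 1) / (κ ^ 4 * (κ ^ 2 + 1))) hdet1, upper_coord_iff hκ]
    · exact ⟨fun h => h.2.2, fun h => ⟨by positivity, by positivity, h⟩⟩
    · rw [hv3, hv11, hv12]
      simp [tB, matB, ← hc]
      field_simp
      ring
    · rw [hv3, hv11, hv12]
      simp [tB, matB, ← hc]
      field_simp
      ring
  have m4 : inTriangle (vtx κ μ 1) (vtx κ μ 2) (-(tB κ).mulVec (vtx κ μ 0)) ↔
      c * μ ≤ (κ ^ 2 + 1) ^ 2 / (κ ^ 4 + κ ^ 2 + 1) := by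
    rw [inTriangle_iff_of_coords (s := c * μ * (κ ^ 6 - 1) / (κ ^ 4 * (κ ^ 2 + 1)))
      (t := 1 / κ ^ 4) hdet2, add_comm (_ / _) (1 / κ ^ 4), upper_coord_iff hκ]
    · exact ⟨fun h => h.2.2, fun h => ⟨by positivity, by positivity, h⟩⟩
    · rw [hv1, hv2, hv3]
      simp [tB, matB, ← hc]
      field_simp
      ring
    · rw [hv1, hv2, hv3]
      simp [tB, matB, ← hc]
      field_simp
      ring
  have hle : c * μ ≤ μ := mul_le_of_le_one_left hμ.le hc1.le
  rw [m1, m2, m3, m4, hcinv, inv_le_iff_one_le_mul₀' hc0]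
  exact ⟨fun h => ⟨h.2.1, h.2.2.1⟩, fun h => ⟨h.1.trans hle, h.1, h.2, hle.trans h.2⟩⟩
end

section
/- Define μ₁(κ) = κ^{2/3} and μ₂(κ) = (κ²+1)²/(κ⁴+κ²+1) for κ > 1. Then there exists a unique κ_max > 1 such that μ₁(κ_max) = μ₂(κ_max), and for every κ > 1 one has μ₁(κ) ≤ μ₂(κ) if and only if κ ≤ κ_max; moreover 1.44789 < κ_max < 1.44790. -/
/-! On `κ > 1` the function `κ ↦ κ ^ (2/3)` is strictly increasing, while with `t = κ ^ 2`
the other one is `(t + 1)² / (t² + t + 1) = 1 + t / (t² + t + 1)`, which is strictly decreasing for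
`t ≥ 1`. Hence their difference `gap` is strictly increasing on `[1, ∞)` (`gap_strictMonoOn`). It is
continuous, negative at `1.44789` and positive at `1.44790` (cubing turns these two facts into
rational inequalities), so the intermediate value theorem gives a zero between these points, and
strict monotonicity gives its uniqueness and the sign of `gap` on either side. -/

/-- The difference `μ₁ κ - μ₂ κ`. -/
noncomputable def gap (κ : ℝ) : ℝ :=
  κ ^ ((2 : ℝ) / 3) - (κ ^ 2 + 1) ^ 2 / (κ ^ 4 + κ ^ 2 + 1)

lemma gap_strictMonoOn : StrictMonoOn gap (Set.Ici 1) := by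
  intro a ha b hb hab
  have ha1 : (1 : ℝ) ≤ a := ha
  have hb1 : (1 : ℝ) ≤ b := hb
  have h1 : a ^ ((2 : ℝ) / 3) < b ^ ((2 : ℝ) / 3) :=
    Real.rpow_lt_rpow (by linarith) hab (by norm_num)
  have h2 : (b ^ 2 + 1) ^ 2 / (b ^ 4 + b ^ 2 + 1) < (a ^ 2 + 1) ^ 2 / (a ^ 4 + a ^ 2 + 1) := by
    rw [div_lt_div_iff₀ (by positivity) (by positivity)]
    have hs : 1 ≤ a ^ 2 := one_le_pow₀ ha1
    have hst : a ^ 2 < b ^ 2 := pow_lt_pow_left₀ hab (by linarith) (by norm_num)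
    -- The cross-multiplied difference factors as `(b² - a²) (a² b² - 1)`.
    have hp : 0 < (b ^ 2 - a ^ 2) * (a ^ 2 * b ^ 2 - 1) :=
      mul_pos (by linarith) (by nlinarith)
    linear_combination hp
  unfold gap
  linarith

/-- The exact cube of `κ ^ (2/3)`, used to compare it with rational numbers. -/
lemma rpow_two_thirds_cube {a : ℝ} (ha : 0 ≤ a) : (a ^ ((2 : ℝ) / 3)) ^ 3 = a ^ 2 := by
  rw [← Real.rpow_natCast, ← Real.rpow_mul ha, ← Real.rpow_natCast]
  norm_num

lemma gap_lower_neg : gap 1.44789 < 0 := by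
  refine sub_neg.2 (lt_of_pow_lt_pow_left₀ 3 (by positivity) ?_)
  rw [rpow_two_thirds_cube (by norm_num)]
  norm_num

lemma gap_upper_pos : 0 < gap 1.44790 := by
  refine sub_pos.2 (lt_of_pow_lt_pow_left₀ 3 (by positivity) ?_)
  rw [rpow_two_thirds_cube (by norm_num)]
  norm_num

lemma gap_continuous : Continuous gap := by
  unfold gap
  refine (Real.continuous_rpow_const (by norm_num)).sub (Continuous.div (by fun_prop) (by fun_prop) ?_)
  intro x
  positivity


/-- with μ₁(κ) = κ^{2/3} and μ₂(κ) = (κ²+1)²/(κ⁴+κ²+1), there is a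
unique κ_max > 1 with μ₁(κ_max) = μ₂(κ_max); for every κ > 1, μ₁(κ) ≤ μ₂(κ) iff
κ ≤ κ_max; and 1.44789 < κ_max < 1.44790. -/
theorem kappa_max_exists_unique :
    ∃ κmax : ℝ, 1 < κmax ∧
      κmax ^ ((2 : ℝ) / 3) = (κmax ^ 2 + 1) ^ 2 / (κmax ^ 4 + κmax ^ 2 + 1) ∧
      (∀ κ : ℝ, 1 < κ →
        κ ^ ((2 : ℝ) / 3) = (κ ^ 2 + 1) ^ 2 / (κ ^ 4 + κ ^ 2 + 1) → κ = κmax) ∧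
      (∀ κ : ℝ, 1 < κ →
        (κ ^ ((2 : ℝ) / 3) ≤ (κ ^ 2 + 1) ^ 2 / (κ ^ 4 + κ ^ 2 + 1) ↔ κ ≤ κmax)) ∧
      1.44789 < κmax ∧ κmax < 1.44790 := by
  obtain ⟨k, ⟨hk1, hk2⟩, hk⟩ :=
    intermediate_value_Ioo (by norm_num : (1.44789 : ℝ) ≤ 1.44790) gap_continuous.continuousOn
      ⟨gap_lower_neg, gap_upper_pos⟩
  have h1k : 1 < k := lt_trans (by norm_num) hk1
  refine ⟨k, h1k, sub_eq_zero.1 hk, fun κ hκ h => ?_, fun κ hκ => ?_, hk1, hk2⟩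
  · exact gap_strictMonoOn.injOn hκ.le h1k.le ((sub_eq_zero.2 h).trans hk.symm)
  · rw [← gap_strictMonoOn.le_iff_le hκ.le h1k.le, hk]
    exact sub_nonpos.symm
end

section
/- Let κ > 1 satisfy κ^{2/3}(κ⁴+κ²+1) ≤ (κ²+1)², and define the 2×2 real matrices A = [[0, −1/κ],[κ, −1]] and B = [[0, −κ],[1/κ, −1]]. Then there exists a norm ‖·‖ on ℝ² such that ‖Ax‖ ≤ κ^{2/3}‖x‖ and ‖Bx‖ ≤ κ^{2/3}‖x‖ for all x ∈ ℝ² (i.e., an extremal norm in which both A and B are contractions up to the factor κ^{2/3}). -/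
open Matrix

/-!
With `r = κ^{1/3}`, the target factor is `r²`, and `A²B`, `AB²` both have spectral radius
`κ² = (r²)³`. Since `Aᵀ = S B S` with `S = diag(1, -1)`, an invariant polygon for `{A, B}` gives,
after applying `S`, a finite family of linear functionals whose maximum modulus is an extremal norm.
The polygon used is the symmetric hull of the two cycles through the leading eigenvectors
`(0, 1)` of `AB²` and `(1, κ + κ⁻¹)` of `A²B`, the second rescaled by `r³ / (r⁶ + 1)`.
The resulting six functionals are the rows of `extremalRows r`.

Each functional composed with `A` or `B` is a combination of at most two of the six, and
`norm_comp_le` reduces the theorem to the bound `|α| + |β| ≤ r²` on its coefficients.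
The chosen rescaling turns one of these bounds into an equality; the hypothesis on `κ`, multiplied
by `r⁶ - 1`, is exactly what the functional in the last row composed with `A` requires.
-/

/-- The six functionals on `ℝ²` whose maximum modulus is the extremal norm, with `r³ = κ`.
Rows 0–2 come from the cycle of `(0, 1)` under `AB²`, rows 3–5 from that of `(1, κ + κ⁻¹)`
under `A²B`; signs are chosen for convenience. -/
noncomputable def extremalRows (r : ℝ) : Matrix (Fin 6) (Fin 2) ℝ :=
  !![0, 1;
     r, -(1 / r ^ 2);
     1 / r, 0;
     r ^ 3 / (r ^ 6 + 1), -1;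
     r, -(r ^ 4 / (r ^ 6 + 1));
     1 / (r * (r ^ 6 + 1)), r ^ 8 / (r ^ 6 + 1)]

/-- If every coordinate of `v` is a combination of two coordinates of `u` with coefficients of
total modulus at most `ρ`, then `‖v‖ ≤ ρ ‖u‖` in the sup norm. -/
lemma norm_comp_le {ρ : ℝ} (hρ : 0 ≤ ρ) (u v : Fin 6 → ℝ)
    (H : ∀ i, ∃ (j k : Fin 6) (α β : ℝ), |α| + |β| ≤ ρ ∧ v i = α * u j + β * u k) :
    ‖v‖ ≤ ρ * ‖u‖ := by
  rw [pi_norm_le_iff_of_nonneg (by positivity)]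
  intro i
  obtain ⟨j, k, α, β, h1, h2⟩ := H i
  have hj := norm_le_pi_norm u j
  have hk := norm_le_pi_norm u k
  rw [h2]
  calc ‖α * u j + β * u k‖ ≤ ‖α * u j‖ + ‖β * u k‖ := norm_add_le _ _
    _ = |α| * ‖u j‖ + |β| * ‖u k‖ := by simp only [norm_mul, Real.norm_eq_abs]
    _ ≤ |α| * ‖u‖ + |β| * ‖u‖ := by gcongr
    _ = (|α| + |β|) * ‖u‖ := by ring
    _ ≤ ρ * ‖u‖ := by gcongr

lemma extremalRows_A {r : ℝ} (hr : 1 < r)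
    (h : r ^ 2 * (r ^ 12 + r ^ 6 + 1) ≤ (r ^ 6 + 1) ^ 2) (x : Fin 2 → ℝ) :
    ‖(extremalRows r).mulVec ((!![0, -(1 / r ^ 3); r ^ 3, -1] : Matrix _ _ ℝ).mulVec x)‖
      ≤ r ^ 2 * ‖(extremalRows r).mulVec x‖ := by
  have h0 : 0 < r := by linarith
  have h6 : 1 < r ^ 6 := one_lt_pow₀ hr (by norm_num)
  have h18 : 1 < r ^ 18 := one_lt_pow₀ hr (by norm_num)
  have hq : 0 < r ^ 6 + 1 := by positivity
  have e2 : |r ^ 2| = r ^ 2 := abs_of_nonneg (by positivity)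
  have e10 : |1 / r ^ 10| = 1 / r ^ 10 := abs_of_nonneg (by positivity)
  apply norm_comp_le (by positivity)
  intro i
  fin_cases i
  · refine ⟨1, 1, r ^ 2, 0, by simp, ?_⟩
    simp [extremalRows, Matrix.mulVec, dotProduct, Fin.sum_univ_succ]
    field_simp
    try ring
  · refine ⟨2, 2, -r ^ 2, 0, by simp, ?_⟩
    simp [extremalRows, Matrix.mulVec, dotProduct, Fin.sum_univ_succ]
    field_simp
    try ring
  · refine ⟨0, 0, -(1 / r ^ 4), 0, ?_, ?_⟩
    · rw [abs_neg, abs_zero, add_zero, abs_of_nonneg (by positivity)]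
      rw [div_le_iff₀ (by positivity)]
      nlinarith
    simp [extremalRows, Matrix.mulVec, dotProduct, Fin.sum_univ_succ]
    field_simp
    try ring
  · refine ⟨4, 4, -r ^ 2, 0, by simp, ?_⟩
    simp [extremalRows, Matrix.mulVec, dotProduct, Fin.sum_univ_succ]
    field_simp
    try ring
  · refine ⟨5, 2, -(1 / r ^ 10), -((r ^ 18 - 1) / (r ^ 10 * (r ^ 6 + 1))), ?_, ?_⟩
    · rw [abs_neg, abs_neg, e10, abs_of_nonneg (div_nonneg (by linarith) (by positivity))]
      have : 1 / r ^ 10 + (r ^ 18 - 1) / (r ^ 10 * (r ^ 6 + 1))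
          = (r ^ 18 + r ^ 6) / (r ^ 10 * (r ^ 6 + 1)) := by
        field_simp
        ring
      rw [this, div_le_iff₀ (by positivity)]
      nlinarith
    simp [extremalRows, Matrix.mulVec, dotProduct, Fin.sum_univ_succ]
    field_simp
    try ring
  · refine ⟨1, 3, (r ^ 18 - 1) / (r ^ 8 * (r ^ 6 + 1)), 1 / r ^ 10, ?_, ?_⟩
    · rw [e10, abs_of_nonneg (div_nonneg (by linarith) (by positivity))]
      have : (r ^ 18 - 1) / (r ^ 8 * (r ^ 6 + 1)) + 1 / r ^ 10
          = (r ^ 2 * (r ^ 18 - 1) + (r ^ 6 + 1)) / (r ^ 10 * (r ^ 6 + 1)) := by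
        field_simp
        try ring
      rw [this, div_le_iff₀ (by positivity)]
      -- `r¹⁸ - 1 = (r⁶ - 1)(r¹² + r⁶ + 1)` matches the left side of `h` after this product.
      have := mul_le_mul_of_nonneg_right h (by linarith : 0 ≤ r ^ 6 - 1)
      linarith
    simp [extremalRows, Matrix.mulVec, dotProduct, Fin.sum_univ_succ]
    field_simp
    try ring

lemma extremalRows_B {r : ℝ} (hr : 1 < r) (x : Fin 2 → ℝ) :
    ‖(extremalRows r).mulVec ((!![0, -r ^ 3; 1 / r ^ 3, -1] : Matrix _ _ ℝ).mulVec x)‖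
      ≤ r ^ 2 * ‖(extremalRows r).mulVec x‖ := by
  have h0 : 0 < r := by linarith
  have h2 : 1 < r ^ 2 := one_lt_pow₀ hr (by norm_num)
  have h6 : 1 < r ^ 6 := one_lt_pow₀ hr (by norm_num)
  have hq : 0 < r ^ 6 + 1 := by positivity
  apply norm_comp_le (by positivity)
  intro i
  fin_cases i
  · refine ⟨1, 0, 1 / r ^ 4, -((r ^ 6 - 1) / r ^ 6), ?_, ?_⟩
    · rw [abs_neg, abs_of_nonneg (by positivity),
        abs_of_nonneg (div_nonneg (by linarith) (by positivity))]
      have : 1 / r ^ 4 + (r ^ 6 - 1) / r ^ 6 = (r ^ 2 + r ^ 6 - 1) / r ^ 6 := by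
        field_simp
        try ring
      rw [this, div_le_iff₀ (by positivity)]
      nlinarith [mul_pos (sub_pos.2 h2) (sub_pos.2 h6)]
    simp [extremalRows, Matrix.mulVec, dotProduct, Fin.sum_univ_succ]
    field_simp
    try ring
  · refine ⟨5, 2, -((r ^ 6 + 1) * (r ^ 6 - 1) / r ^ 10), -(1 / r ^ 10), ?_, ?_⟩
    · rw [abs_neg, abs_neg, abs_of_nonneg (by positivity : 0 ≤ 1 / r ^ 10),
        abs_of_nonneg (div_nonneg (mul_nonneg hq.le (by linarith)) (by positivity))]
      apply le_of_eq
      field_simp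
      try ring
    simp [extremalRows, Matrix.mulVec, dotProduct, Fin.sum_univ_succ]
    field_simp
    try ring
  · refine ⟨0, 0, -r ^ 2, 0, by simp, ?_⟩
    simp [extremalRows, Matrix.mulVec, dotProduct, Fin.sum_univ_succ]
    field_simp
    try ring
  · refine ⟨4, 4, -(1 / r ^ 4), 0, ?_, ?_⟩
    · rw [abs_neg, abs_zero, add_zero, abs_of_nonneg (by positivity)]
      rw [div_le_iff₀ (by positivity)]
      nlinarith
    simp [extremalRows, Matrix.mulVec, dotProduct, Fin.sum_univ_succ]
    field_simp
    try ring
  · refine ⟨5, 5, -r ^ 2, 0, by simp, ?_⟩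
    simp [extremalRows, Matrix.mulVec, dotProduct, Fin.sum_univ_succ]
    field_simp
    try ring
  · refine ⟨3, 3, r ^ 2, 0, by simp, ?_⟩
    simp [extremalRows, Matrix.mulVec, dotProduct, Fin.sum_univ_succ]
    field_simp
    try ring



/-- for κ > 1 with κ^{2/3}(κ⁴+κ²+1) ≤ (κ²+1)², there is a norm on
ℝ² (here: a seminorm vanishing only at 0) in which both A = [[0,−1/κ],[κ,−1]] and
B = [[0,−κ],[1/κ,−1]] are contractions up to the factor κ^{2/3}:
‖Ax‖ ≤ κ^{2/3}‖x‖ and ‖Bx‖ ≤ κ^{2/3}‖x‖ for all x. -/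
theorem extremal_norm_exists (κ : ℝ) (hκ : 1 < κ)
    (h : κ ^ ((2 : ℝ) / 3) * (κ ^ 4 + κ ^ 2 + 1) ≤ (κ ^ 2 + 1) ^ 2) :
    let A : Matrix (Fin 2) (Fin 2) ℝ := !![0, -(1 / κ); κ, -1]
    let B : Matrix (Fin 2) (Fin 2) ℝ := !![0, -κ; 1 / κ, -1]
    ∃ N : Seminorm ℝ (Fin 2 → ℝ),
      (∀ x : Fin 2 → ℝ, N x = 0 → x = 0) ∧
      (∀ x : Fin 2 → ℝ, N (A.mulVec x) ≤ κ ^ ((2 : ℝ) / 3) * N x) ∧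
      (∀ x : Fin 2 → ℝ, N (B.mulVec x) ≤ κ ^ ((2 : ℝ) / 3) * N x) := by
  intro A B
  obtain ⟨r, hr, rfl, hρ⟩ : ∃ r : ℝ, 1 < r ∧ r ^ 3 = κ ∧ κ ^ ((2 : ℝ) / 3) = r ^ 2 := by
    have hκ0 : 0 ≤ κ := by linarith
    refine ⟨κ ^ ((1 : ℝ) / 3), Real.one_lt_rpow hκ (by norm_num), ?_, ?_⟩
    · rw [← Real.rpow_natCast, ← Real.rpow_mul hκ0]
      norm_num
    · rw [← Real.rpow_natCast, ← Real.rpow_mul hκ0]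
      norm_num
  have h0 : r ≠ 0 := by positivity
  rw [hρ] at h ⊢
  refine ⟨(normSeminorm ℝ (Fin 6 → ℝ)).comp (extremalRows r).mulVecLin, ?_, ?_, ?_⟩
  · intro x hx
    have hx' : (extremalRows r).mulVec x = 0 := by simpa using hx
    -- Rows 0 and 2 are nonzero multiples of the two coordinates.
    have hy := congrFun hx' 0
    have hz := congrFun hx' 2
    simp [extremalRows, Matrix.mulVec, dotProduct, Fin.sum_univ_succ, h0] at hy hz
    ext i
    fin_cases i
    · exact hz
    · exact hy
  · intro x
    exact extremalRows_A hr (by ring_nf at h ⊢; exact h) x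
  · intro x
    exact extremalRows_B hr x
end
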